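/- (Main Theorem) Let k ≥ 1, n > k, and let f : F_2^n → {0,1} be a non-trivial Boolean function (not identically 0 or 1) all of whose Fourier coefficients lie in {0, ±1/2^k, ±2/2^k}. If f̂(0) = 1/2^k, then f is the indicator of an affine subspace of dimension n−k. If f̂(0) = 2/2^k and f is irreducible, then f is the indicator of a disjoint union of two affine subspaces of dimension n−k, or (only possible when k = 4) of four disjoint affine subspaces of dimension n−k−1. -/

import Mathlib

open Finset

/-- The Fourier coefficient `f̂(α) = E_x[f(x)·(-1)^⟨α,x⟩]` of `f : F_2^n → ℝ`. -/
noncomputable def fc {n : ℕ} (f : (Fin n → ZMod 2) → ℝ) (α : Fin n → ZMod 2) : ℝ :=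
  (∑ x : Fin n → ZMod 2, f x * (-1 : ℝ) ^ (∑ i, α i * x i : ZMod 2).val) / 2 ^ n

section Spectrum

variable {n : ℕ}

/-- The integer-valued character `x ↦ (-1)^⟨α, x⟩`. -/
def chi (α x : Fin n → ZMod 2) : ℤ := (-1) ^ (∑ i, α i * x i : ZMod 2).val

lemma neg_one_pow_val_add (a b : ZMod 2) :
    (-1 : ℤ) ^ (a + b).val = (-1) ^ a.val * (-1) ^ b.val := by
  revert a b; decide

lemma chi_add_left (α β x : Fin n → ZMod 2) : chi (α + β) x = chi α x * chi β x := by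
  simp only [chi, ← neg_one_pow_val_add, ← sum_add_distrib, Pi.add_apply, add_mul]

lemma chi_add_right (α x y : Fin n → ZMod 2) : chi α (x + y) = chi α x * chi α y := by
  simp only [chi, ← neg_one_pow_val_add, ← sum_add_distrib, Pi.add_apply, mul_add]

@[simp] lemma chi_zero_left (x : Fin n → ZMod 2) : chi 0 x = 1 := by simp [chi]

@[simp] lemma chi_zero_right (α : Fin n → ZMod 2) : chi α 0 = 1 := by simp [chi]

lemma chi_eq_or (α x : Fin n → ZMod 2) : chi α x = 1 ∨ chi α x = -1 :=
  neg_one_pow_eq_or ℤ _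

lemma eq_zero_of_chi_eq_one {α x : Fin n → ZMod 2} (h : chi α x = 1) :
    ∑ i, α i * x i = 0 := by
  have key : ∀ a : ZMod 2, (-1 : ℤ) ^ a.val = 1 → a = 0 := by decide
  exact key _ h

lemma vec_add_self (x : Fin n → ZMod 2) : x + x = 0 := by
  ext i; simpa using CharTwo.add_self_eq_zero (x i)

lemma vec_add_cancel (x y : Fin n → ZMod 2) : x + (x + y) = y := by
  rw [← add_assoc, vec_add_self, zero_add]

lemma vec_add_eq_zero {x y : Fin n → ZMod 2} : x + y = 0 ↔ x = y := by
  constructor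
  · intro h
    have := vec_add_cancel x y
    rw [h, add_zero] at this
    exact this
  · rintro rfl; exact vec_add_self x

lemma sum_chi {z : Fin n → ZMod 2} (hz : z ≠ 0) : ∑ α, chi α z = 0 := by
  obtain ⟨i, hi⟩ := Function.ne_iff.mp hz
  have h1 : chi (Pi.single i 1) z = -1 := by
    have h2 : ∀ a : ZMod 2, a ≠ 0 → (-1 : ℤ) ^ a.val = -1 := by decide
    have h3 : ∑ j, (Pi.single i 1 : Fin n → ZMod 2) j * z j = z i := by
      simp [Pi.single_apply]
    rw [chi, h3]
    exact h2 _ hi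
  have h4 : ∑ α, chi α z = ∑ α, chi (α + Pi.single i 1) z :=
    (Equiv.sum_comp (Equiv.addRight (Pi.single i 1)) fun α => chi α z).symm
  simp only [chi_add_left, h1, mul_neg, mul_one, sum_neg_distrib] at h4
  omega

/-- The character sum of a finite set of vectors. -/
def charSum (S : Finset (Fin n → ZMod 2)) (α : Fin n → ZMod 2) : ℤ := ∑ x ∈ S, chi α x

lemma charSum_zero (S : Finset (Fin n → ZMod 2)) : charSum S 0 = #S := by simp [charSum]

lemma charSum_inversion (S : Finset (Fin n → ZMod 2)) (y : Fin n → ZMod 2) :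
    ∑ α, charSum S α * chi α y = if y ∈ S then 2 ^ n else 0 := by
  have h1 : ∀ x, ∑ α, chi α x * chi α y = if x = y then (2 : ℤ) ^ n else 0 := by
    intro x
    simp only [← chi_add_right]
    split_ifs with h
    · subst h
      simp [vec_add_self]
    · exact sum_chi fun h' => h (vec_add_eq_zero.mp h')
  simp only [charSum, sum_mul]
  rw [sum_comm]
  simp [h1]

lemma charSum_parseval (S : Finset (Fin n → ZMod 2)) :
    ∑ α, charSum S α * charSum S α = 2 ^ n * #S := by
  have h1 : ∑ y ∈ S, ∑ α, charSum S α * chi α y = ∑ y ∈ S, (2 : ℤ) ^ n :=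
    sum_congr rfl fun y hy => by rw [charSum_inversion, if_pos hy]
  rw [sum_comm] at h1
  simp only [← mul_sum] at h1
  simpa [charSum, mul_comm] using h1

lemma abs_charSum_le (S : Finset (Fin n → ZMod 2)) (α : Fin n → ZMod 2) :
    |charSum S α| ≤ #S := by
  refine (abs_sum_le_sum_abs _ _).trans ?_
  rw [card_eq_sum_ones, Nat.cast_sum]
  refine sum_le_sum fun x _ => ?_
  rcases chi_eq_or α x with h | h <;> simp [h]

lemma chi_eq_of_charSum {S : Finset (Fin n → ZMod 2)} {α : Fin n → ZMod 2} {e : ℤ}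
    (he : e = 1 ∨ e = -1) (h : charSum S α = e * #S) {x : Fin n → ZMod 2} (hx : x ∈ S) :
    chi α x = e := by
  have h1 : ∑ x ∈ S, (1 - e * chi α x) = 0 := by
    rw [sum_sub_distrib, ← mul_sum]
    change _ - e * charSum S α = 0
    rcases he with rfl | rfl <;> simp [h]
  have h2 := (sum_eq_zero_iff_of_nonneg fun y _ => by
    rcases he with rfl | rfl <;> rcases chi_eq_or α y with h | h <;> simp [h]).mp h1 x hx
  rcases he with rfl | rfl <;> linarith

/-- A set of vectors all of whose character sums vanish or are extremal is a flat. -/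
lemma exists_flat {S : Finset (Fin n → ZMod 2)} {d : ℕ} (hd : #S = 2 ^ d)
    (h : ∀ α, charSum S α = 0 ∨ charSum S α = #S ∨ charSum S α = -#S) :
    ∃ (a : Fin n → ZMod 2) (V : Submodule (ZMod 2) (Fin n → ZMod 2)),
      Module.finrank (ZMod 2) V = d ∧
        (S : Set (Fin n → ZMod 2)) = (a + ·) '' (V : Set (Fin n → ZMod 2)) := by
  obtain ⟨a, ha⟩ : S.Nonempty := by
    rw [← card_pos, hd]; positivity
  have key : ∀ x ∈ S, ∀ y ∈ S, a + (x + y) ∈ S := by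
    intro x hx y hy
    have h1 : ∑ α, charSum S α * chi α (a + (x + y)) = ∑ α, charSum S α * chi α a := by
      refine sum_congr rfl fun α _ => ?_
      obtain h0 | ⟨e, he, h0⟩ :
          charSum S α = 0 ∨ ∃ e : ℤ, (e = 1 ∨ e = -1) ∧ charSum S α = e * #S := by
        rcases h α with h | h | h
        · exact Or.inl h
        · exact Or.inr ⟨1, by simp, by simp [h]⟩
        · exact Or.inr ⟨-1, by simp, by simp [h]⟩
      · simp [h0]
      · rw [chi_add_right, chi_add_right, chi_eq_of_charSum he h0 hx, chi_eq_of_charSum he h0 hy]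
        rcases he with rfl | rfl <;> ring
    by_contra h2
    rw [charSum_inversion, charSum_inversion, if_pos ha, if_neg h2] at h1
    exact absurd h1.symm (by positivity)
  let H : AddSubgroup (Fin n → ZMod 2) :=
    { carrier := {v | a + v ∈ S}
      zero_mem' := by simpa using ha
      add_mem' := by
        intro v w hv hw
        have := key _ hv _ hw
        have h3 : a + (a + v + (a + w)) = a + (v + w) := by
          rw [add_add_add_comm, vec_add_self, zero_add]
        rwa [h3] at this
      neg_mem' := by
        intro v hv
        have h3 : -v = v := by
          rw [neg_eq_iff_add_eq_zero, vec_add_self]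
        simpa [h3] using hv }
  have hS : (S : Set (Fin n → ZMod 2)) = (a + ·) '' (H : Set (Fin n → ZMod 2)) := by
    ext x
    constructor
    · intro hx
      exact ⟨a + x, by change a + (a + x) ∈ S; rwa [vec_add_cancel], vec_add_cancel a x⟩
    · rintro ⟨v, hv, rfl⟩
      exact hv
  refine ⟨a, AddSubgroup.toZModSubmodule 2 H, ?_, hS⟩
  have h4 : Nat.card H = 2 ^ d := by
    rw [← hd, ← Set.ncard_coe_finset, hS, Set.ncard_image_of_injective _ (add_right_injective a)]
    rfl
  have h5 := Module.natCard_eq_pow_finrank (K := ZMod 2) (V := AddSubgroup.toZModSubmodule 2 H)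
  have h6 : Nat.card (AddSubgroup.toZModSubmodule 2 H) = 2 ^ d := h4
  rw [h6, Nat.card_zmod] at h5
  exact (Nat.pow_right_injective le_rfl h5).symm

/-- The spectrum of the indicator of `S`, scaled by `q`, is `2` at the origin and
`0`, `1` or `-1` elsewhere. -/
structure SmallSpectrum (S : Finset (Fin n → ZMod 2)) (k : ℕ) (q : ℤ)
    (G : (Fin n → ZMod 2) → ℤ) : Prop where
  q_pos : 0 < q
  scale : q * 2 ^ k = 2 ^ n
  zero : G 0 = 2
  charSum_eq : ∀ α, charSum S α = q * G α
  small : ∀ α, α ≠ 0 → G α = 0 ∨ G α = 1 ∨ G α = -1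

/-- The part of `S` on which the character `α` takes the sign opposite to `G α`. -/
def minority (S : Finset (Fin n → ZMod 2)) (G : (Fin n → ZMod 2) → ℤ)
    (α : Fin n → ZMod 2) : Finset (Fin n → ZMod 2) :=
  S.filter fun x => G α * chi α x = -1

lemma mem_minority {S : Finset (Fin n → ZMod 2)} {G : (Fin n → ZMod 2) → ℤ}
    {α x : Fin n → ZMod 2} : x ∈ minority S G α ↔ x ∈ S ∧ G α * chi α x = -1 := by
  simp [minority]

/-- The frequency `α` carries a coefficient `1` or `-1`. -/
abbrev UnitCoef (G : (Fin n → ZMod 2) → ℤ) (α : Fin n → ZMod 2) : Prop := G α = 1 ∨ G α = -1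

lemma UnitCoef.mul_chi {G : (Fin n → ZMod 2) → ℤ} {α : Fin n → ZMod 2} (h : UnitCoef G α)
    (x : Fin n → ZMod 2) : G α * chi α x = 1 ∨ G α * chi α x = -1 := by
  rcases h with h | h <;> rcases chi_eq_or α x with h' | h' <;> simp [h, h']

lemma UnitCoef.sq {G : (Fin n → ZMod 2) → ℤ} {α : Fin n → ZMod 2} (h : UnitCoef G α) :
    G α * G α = 1 := by
  rcases h with h | h <;> simp [h]

namespace SmallSpectrum

variable {S : Finset (Fin n → ZMod 2)} {k : ℕ} {q : ℤ} {G : (Fin n → ZMod 2) → ℤ}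

lemma card_eq (h : SmallSpectrum S k q G) : (#S : ℤ) = 2 * q := by
  rw [← charSum_zero, h.charSum_eq, h.zero]; ring

lemma ne_zero (h : SmallSpectrum S k q G) {α : Fin n → ZMod 2} (hα : UnitCoef G α) : α ≠ 0 := by
  rintro rfl
  rcases hα with h' | h' <;> rw [h.zero] at h' <;> omega

lemma unitCoef_of_ne (h : SmallSpectrum S k q G) {α : Fin n → ZMod 2} (hα : α ≠ 0)
    (h0 : G α ≠ 0) : UnitCoef G α :=
  (h.small α hα).resolve_left h0

lemma card_minority (h : SmallSpectrum S k q G) {α : Fin n → ZMod 2} (hα : UnitCoef G α) :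
    2 * (#(minority S G α) : ℤ) = q := by
  have h1 : 2 * (#(minority S G α) : ℤ) = ∑ x ∈ S, (1 - G α * chi α x) := by
    rw [minority, card_filter]
    push_cast
    rw [mul_sum]
    refine sum_congr rfl fun x _ => ?_
    rcases hα.mul_chi x with h' | h' <;> simp [h']
  rw [h1, sum_sub_distrib, ← mul_sum]
  change _ - G α * charSum S α = _
  rw [h.charSum_eq, sum_const, nsmul_one, h.card_eq]
  linear_combination (-q) * hα.sq

lemma card_pair (h : SmallSpectrum S k q G) {α β : Fin n → ZMod 2} (hα : UnitCoef G α)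
    (hβ : UnitCoef G β) :
    4 * (#(minority S G α ∩ minority S G β) : ℤ) = q * (G α * G β * G (α + β)) := by
  have h1 : 4 * (#(minority S G α ∩ minority S G β) : ℤ) =
      ∑ x ∈ S, (1 - G α * chi α x - G β * chi β x + G α * G β * chi (α + β) x) := by
    rw [minority, minority, ← filter_and, card_filter]
    push_cast
    rw [mul_sum]
    refine sum_congr rfl fun x _ => ?_
    have h2 : G α * G β * chi (α + β) x = (G α * chi α x) * (G β * chi β x) := by
      rw [chi_add_left]; ring
    rw [h2]
    rcases hα.mul_chi x with h' | h' <;> rcases hβ.mul_chi x with h'' | h'' <;> simp [h', h'']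
  rw [h1, sum_add_distrib, sum_sub_distrib, sum_sub_distrib, ← mul_sum, ← mul_sum, ← mul_sum]
  change _ - G α * charSum S α - G β * charSum S β + _ * charSum S _ = _
  simp only [h.charSum_eq, sum_const, nsmul_one, h.card_eq]
  linear_combination (-q) * hα.sq - q * hβ.sq

lemma card_triple (h : SmallSpectrum S k q G) {α β δ : Fin n → ZMod 2} (hα : UnitCoef G α)
    (hβ : UnitCoef G β) (hδ : UnitCoef G δ) :
    8 * (#(minority S G α ∩ minority S G β ∩ minority S G δ) : ℤ) =
      q * (G α * G β * G (α + β) + G α * G δ * G (α + δ) + G β * G δ * G (β + δ) - 1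
        - G α * G β * G δ * G (α + β + δ)) := by
  have h1 : 8 * (#(minority S G α ∩ minority S G β ∩ minority S G δ) : ℤ) =
      ∑ x ∈ S, (1 - G α * chi α x - G β * chi β x - G δ * chi δ x
        + G α * G β * chi (α + β) x + G α * G δ * chi (α + δ) x + G β * G δ * chi (β + δ) x
        - G α * G β * G δ * chi (α + β + δ) x) := by
    rw [minority, minority, minority, ← filter_and, ← filter_and, card_filter]
    push_cast
    rw [mul_sum]
    refine sum_congr rfl fun x _ => ?_
    have h2 : (1 - G α * chi α x - G β * chi β x - G δ * chi δ x
        + G α * G β * chi (α + β) x + G α * G δ * chi (α + δ) x + G β * G δ * chi (β + δ) x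
        - G α * G β * G δ * chi (α + β + δ) x) =
        (1 - G α * chi α x) * (1 - G β * chi β x) * (1 - G δ * chi δ x) := by
      simp only [chi_add_left]; ring
    rw [h2]
    rcases hα.mul_chi x with h' | h' <;> rcases hβ.mul_chi x with h'' | h'' <;>
      rcases hδ.mul_chi x with h3 | h3 <;> simp [h', h'', h3]
  rw [h1]
  simp only [sum_add_distrib, sum_sub_distrib, ← mul_sum]
  simp only [← charSum.eq_1, h.charSum_eq, sum_const, nsmul_one, h.card_eq]
  linear_combination (-q) * hα.sq - q * hβ.sq - q * hδ.sq

lemma pair_cases (h : SmallSpectrum S k q G) {α β : Fin n → ZMod 2} (hα : UnitCoef G α)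
    (hβ : UnitCoef G β) (hne : α ≠ β) :
    (minority S G α ∩ minority S G β = ∅ ∧ G (α + β) = 0) ∨
      (4 * (#(minority S G α ∩ minority S G β) : ℤ) = q ∧ G (α + β) = G α * G β) := by
  have h1 := h.card_pair hα hβ
  have hq := h.q_pos
  have h2 : G α * G β = 1 ∨ G α * G β = -1 := by
    rcases hα with h' | h' <;> rcases hβ with h'' | h'' <;> simp [h', h'']
  have h3 : G (α + β) = 0 ∨ G (α + β) = 1 ∨ G (α + β) = -1 :=
    h.small _ fun h' => hne (vec_add_eq_zero.mp h')
  rcases h2 with h2 | h2 <;> rcases h3 with h3 | h3 | h3 <;> rw [h2, h3] at h1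
  · left
    exact ⟨by rw [← card_eq_zero]; omega, h3⟩
  · right; exact ⟨by linarith, by rw [h2, h3]⟩
  · omega
  · left
    exact ⟨by rw [← card_eq_zero]; omega, h3⟩
  · omega
  · right; exact ⟨by linarith, by rw [h2, h3]⟩

/-- Two minorities with a common point: the sum of the frequencies carries the symmetric
difference. -/
lemma pair_of_mem (h : SmallSpectrum S k q G) {α β x : Fin n → ZMod 2} (hα : UnitCoef G α)
    (hβ : UnitCoef G β) (hne : α ≠ β) (hxα : x ∈ minority S G α) (hxβ : x ∈ minority S G β) :
    4 * (#(minority S G α ∩ minority S G β) : ℤ) = q ∧ G (α + β) = G α * G β := by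
  refine (h.pair_cases hα hβ hne).resolve_left fun h' => ?_
  have : x ∈ minority S G α ∩ minority S G β := mem_inter.mpr ⟨hxα, hxβ⟩
  rw [h'.1] at this
  simp at this

lemma unitCoef_add {α β : Fin n → ZMod 2} (hα : UnitCoef G α)
    (hβ : UnitCoef G β) (hG : G (α + β) = G α * G β) : UnitCoef G (α + β) := by
  unfold UnitCoef
  rw [hG]
  rcases hα with h' | h' <;> rcases hβ with h'' | h'' <;> simp [h', h'']

lemma mem_minority_add {α β : Fin n → ZMod 2} (hα : UnitCoef G α)
    (hβ : UnitCoef G β) (hG : G (α + β) = G α * G β) (x : Fin n → ZMod 2) :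
    x ∈ minority S G (α + β) ↔
      ((x ∈ minority S G α ∧ x ∉ minority S G β) ∨ (x ∉ minority S G α ∧ x ∈ minority S G β)) := by
  simp only [mem_minority]
  have h2 : G (α + β) * chi (α + β) x = (G α * chi α x) * (G β * chi β x) := by
    rw [chi_add_left, hG]; ring
  rw [h2]
  by_cases hx : x ∈ S <;> rcases hα.mul_chi x with hval | hval <;>
    rcases hβ.mul_chi x with hchi | hchi <;> simp [hval, hchi, hx]

/-- The unit frequencies whose minority contains `x`. -/
def through (S : Finset (Fin n → ZMod 2)) (G : (Fin n → ZMod 2) → ℤ) (x : Fin n → ZMod 2) :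
    Finset (Fin n → ZMod 2) :=
  univ.filter fun α => UnitCoef G α ∧ x ∈ minority S G α

lemma mem_through {x α : Fin n → ZMod 2} :
    α ∈ through S G x ↔ UnitCoef G α ∧ x ∈ minority S G α := by
  simp [through]

lemma sum_sq (h : SmallSpectrum S k q G) : ∑ α, G α * G α = 2 * 2 ^ k := by
  have h1 := charSum_parseval S
  have h2 : ∀ α, charSum S α * charSum S α = q * q * (G α * G α) := fun α => by
    rw [h.charSum_eq]; ring
  simp only [h2, ← mul_sum] at h1
  rw [h.card_eq, ← h.scale] at h1
  have hq := h.q_pos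
  have h3 : q * q ≠ 0 := by positivity
  exact mul_left_cancel₀ h3 (by rw [h1]; ring)

lemma sum_mul_chi (h : SmallSpectrum S k q G) {x : Fin n → ZMod 2} (hx : x ∈ S) :
    ∑ α, G α * chi α x = 2 ^ k := by
  have h1 := charSum_inversion S x
  rw [if_pos hx, ← h.scale] at h1
  simp only [h.charSum_eq, mul_assoc, ← mul_sum] at h1
  exact mul_left_cancel₀ h.q_pos.ne' h1

lemma card_unitCoef (h : SmallSpectrum S k q G) :
    (#(univ.filter fun α => UnitCoef G α) : ℤ) + 4 = 2 * 2 ^ k := by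
  rw [← h.sum_sq, ← add_sum_erase univ _ (mem_univ (0 : Fin n → ZMod 2)), h.zero,
    card_filter, ← add_sum_erase univ _ (mem_univ (0 : Fin n → ZMod 2)), if_neg fun h' =>
      h.ne_zero h' rfl]
  push_cast
  have : ∀ α ∈ univ.erase (0 : Fin n → ZMod 2),
      (if UnitCoef G α then (1 : ℤ) else 0) = G α * G α := by
    intro α hα
    rcases h.small α (ne_of_mem_erase hα) with h' | h' | h' <;> simp [UnitCoef, h']
  rw [sum_congr rfl this]
  ring

lemma card_through (h : SmallSpectrum S k q G) {x : Fin n → ZMod 2} (hx : x ∈ S) :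
    2 * (#(through S G x) : ℤ) + 2 = 2 ^ k := by
  have h1 : 2 * (#(through S G x) : ℤ) - 2 + 4 = ∑ α, (G α * G α - G α * chi α x) := by
    rw [← add_sum_erase univ _ (mem_univ (0 : Fin n → ZMod 2)), h.zero, through, card_filter,
      ← add_sum_erase univ _ (mem_univ (0 : Fin n → ZMod 2)), if_neg fun h' => h.ne_zero h'.1 rfl]
    push_cast
    have : ∀ α ∈ univ.erase (0 : Fin n → ZMod 2),
        2 * (if UnitCoef G α ∧ x ∈ minority S G α then (1 : ℤ) else 0) =
          G α * G α - G α * chi α x := by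
      intro α hα
      rcases h.small α (ne_of_mem_erase hα) with h' | h' | h' <;>
        rcases chi_eq_or α x with h'' | h'' <;> simp [UnitCoef, mem_minority, h', h'', hx]
    rw [← sum_congr rfl this, ← mul_sum, chi_zero_left]
    ring
  rw [sum_sub_distrib, h.sum_sq, h.sum_mul_chi hx] at h1
  linarith

lemma q_eq (h : SmallSpectrum S k q G) (hn : k < n) : q = 2 ^ (n - k) := by
  have h1 : (2 : ℤ) ^ k ≠ 0 := by positivity
  refine mul_right_cancel₀ h1 ?_
  rw [h.scale, ← pow_add, Nat.sub_add_cancel hn.le]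

/-- Every minority is a flat. -/
lemma minority_flat (h : SmallSpectrum S k q G) (hn : k < n) {α : Fin n → ZMod 2}
    (hα : UnitCoef G α) :
    ∃ (a : Fin n → ZMod 2) (V : Submodule (ZMod 2) (Fin n → ZMod 2)),
      Module.finrank (ZMod 2) V = n - k - 1 ∧
        (minority S G α : Set (Fin n → ZMod 2)) = (a + ·) '' (V : Set (Fin n → ZMod 2)) := by
  have hcard := h.card_minority hα
  have h1 : ∀ β, 2 * charSum (minority S G α) β = q * (G β - G α * G (α + β)) := by
    intro β
    have h2 : 2 * charSum (minority S G α) β =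
        ∑ x ∈ S, (chi β x - G α * chi (α + β) x) := by
      rw [charSum, minority, sum_filter, mul_sum]
      refine sum_congr rfl fun x _ => ?_
      rw [chi_add_left, ← mul_assoc]
      rcases hα.mul_chi x with h' | h' <;> simp [h']
      ring
    rw [h2, sum_sub_distrib, ← mul_sum, ← charSum.eq_1, ← charSum.eq_1, h.charSum_eq,
      h.charSum_eq]
    ring
  apply exists_flat
  · have hq := h.q_eq hn
    obtain ⟨d, hd⟩ : ∃ d, n - k = d + 1 := ⟨n - k - 1, by omega⟩
    rw [hd] at hq ⊢
    rw [pow_succ] at hq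
    have : (#(minority S G α) : ℤ) = 2 ^ d := by linarith
    exact_mod_cast this
  · intro β
    have h2 := h1 β
    suffices h3 : G β - G α * G (α + β) = 0 ∨ G β - G α * G (α + β) = 1 ∨
        G β - G α * G (α + β) = -1 by
      rcases h3 with h3 | h3 | h3 <;> rw [h3] at h2
      · left; linarith
      · right; left; linarith
      · right; right; linarith
    by_cases hβ0 : β = 0
    · subst hβ0
      rw [add_zero, hα.sq, h.zero]; norm_num
    by_cases hβα : β = α
    · subst hβα
      rw [vec_add_self, h.zero]
      rcases hα with h' | h' <;> simp [h']
    by_cases hβ : G β = 0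
    · rw [hβ]
      rcases h.small (α + β) fun h' => hβα (vec_add_eq_zero.mp h').symm with h' | h' | h' <;>
        rcases hα with h'' | h'' <;> simp [h', h'']
    · have hβ' := h.unitCoef_of_ne hβ0 hβ
      rcases h.pair_cases hα hβ' (Ne.symm hβα) with h' | h'
      · rw [h'.2]
        rcases hβ' with h'' | h'' <;> simp [h'']
      · left
        rw [h'.2, ← mul_assoc, hα.sq]; ring

/-- If translation by `γ` preserves the set of unit frequencies then `γ` cuts `S` into flats. -/
lemma half_flat (h : SmallSpectrum S k q G) (hn : k < n) {γ : Fin n → ZMod 2}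
    (hγ : γ ≠ 0) (hG : G γ = 0) (hinv : ∀ β, UnitCoef G β → UnitCoef G (β + γ))
    {e : ℤ} (he : e = 1 ∨ e = -1) :
    ∃ (a : Fin n → ZMod 2) (V : Submodule (ZMod 2) (Fin n → ZMod 2)),
      Module.finrank (ZMod 2) V = n - k ∧
        (S.filter (fun x => chi γ x = e) : Set (Fin n → ZMod 2)) =
          (a + ·) '' (V : Set (Fin n → ZMod 2)) := by
  set T := S.filter (fun x => chi γ x = e) with hT
  have h1 : ∀ β, 2 * charSum T β = q * (G β + e * G (β + γ)) := by
    intro β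
    have h2 : 2 * charSum T β = ∑ x ∈ S, (chi β x + e * chi (β + γ) x) := by
      rw [charSum, hT, sum_filter, mul_sum]
      refine sum_congr rfl fun x _ => ?_
      rw [chi_add_left]
      rcases he with rfl | rfl <;> rcases chi_eq_or γ x with h' | h' <;> simp [h']
      · ring
      · ring
    rw [h2, sum_add_distrib, ← mul_sum, ← charSum.eq_1, ← charSum.eq_1, h.charSum_eq,
      h.charSum_eq]
    ring
  have hcard : (#T : ℤ) = q := by
    have h2 := h1 0
    rw [charSum_zero, zero_add, hG, h.zero] at h2
    linarith
  apply exists_flat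
  · rw [h.q_eq hn] at hcard
    exact_mod_cast hcard
  · intro β
    have h2 := h1 β
    rw [hcard]
    suffices h3 : G β + e * G (β + γ) = 0 ∨ G β + e * G (β + γ) = 2 ∨
        G β + e * G (β + γ) = -2 by
      rcases h3 with h3 | h3 | h3 <;> rw [h3] at h2
      · left; linarith
      · right; left; linarith
      · right; right; linarith
    by_cases hβ0 : β = 0
    · subst hβ0
      rw [zero_add, hG, h.zero]; norm_num
    by_cases hβγ : β = γ
    · subst hβγ
      rw [vec_add_self, h.zero, hG]
      rcases he with rfl | rfl <;> norm_num
    by_cases hβ : G β = 0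
    · have h4 : G (β + γ) = 0 := by
        by_contra h4
        have h5 := hinv _ (h.unitCoef_of_ne (fun h' => hβγ (vec_add_eq_zero.mp h')) h4)
        rw [add_assoc, vec_add_self, add_zero] at h5
        rcases h5 with h5 | h5 <;> omega
      simp [hβ, h4]
    · have hβ' := h.unitCoef_of_ne hβ0 hβ
      have hβγ' := hinv _ hβ'
      rcases hβ' with h5 | h5 <;> rcases hβγ' with h6 | h6 <;> rcases he with rfl | rfl <;>
        simp [h5, h6]

/-- A frequency preserving the set of unit frequencies. -/
def Invariant (G : (Fin n → ZMod 2) → ℤ) : Prop :=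
  ∃ γ, γ ≠ 0 ∧ G γ = 0 ∧ ∀ β, UnitCoef G β → UnitCoef G (β + γ)

lemma two_flats (h : SmallSpectrum S k q G) (hn : k < n) (hI : Invariant G) :
    ∃ (a b : Fin n → ZMod 2) (V W : Submodule (ZMod 2) (Fin n → ZMod 2)),
      Module.finrank (ZMod 2) V = n - k ∧ Module.finrank (ZMod 2) W = n - k ∧
      Disjoint ((a + ·) '' (V : Set (Fin n → ZMod 2)))
        ((b + ·) '' (W : Set (Fin n → ZMod 2))) ∧
      (S : Set (Fin n → ZMod 2)) =
        (a + ·) '' (V : Set (Fin n → ZMod 2)) ∪ (b + ·) '' (W : Set (Fin n → ZMod 2)) := by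
  obtain ⟨γ, hγ, hG, hinv⟩ := hI
  obtain ⟨a, V, hV, h1⟩ := h.half_flat hn hγ hG hinv (e := 1) (by simp)
  obtain ⟨b, W, hW, h2⟩ := h.half_flat hn hγ hG hinv (e := -1) (by simp)
  refine ⟨a, b, V, W, hV, hW, ?_, ?_⟩
  · rw [← h1, ← h2, Set.disjoint_left]
    intro x hx hx'
    rw [mem_coe, mem_filter] at hx hx'
    omega
  · rw [← h1, ← h2]
    ext x
    have := chi_eq_or γ x
    simp only [Set.mem_union, mem_coe, mem_filter]
    tauto

/-- A family of minorities pairwise meeting in a common core. -/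
def Sunflower (S : Finset (Fin n → ZMod 2)) (G : (Fin n → ZMod 2) → ℤ)
    (F : Finset (Fin n → ZMod 2)) (P : Finset (Fin n → ZMod 2)) : Prop :=
  (∀ α ∈ F, UnitCoef G α) ∧
    ∀ α ∈ F, ∀ β ∈ F, α ≠ β → minority S G α ∩ minority S G β = P

lemma Sunflower.core_subset {F P : Finset (Fin n → ZMod 2)} (hF : Sunflower S G F P)
    (h2 : 2 ≤ #F) {α : Fin n → ZMod 2} (hα : α ∈ F) : P ⊆ minority S G α := by
  obtain ⟨β, hβ, hne⟩ := exists_mem_ne (by omega : 1 < #F) α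
  rw [← hF.2 α hα β hβ hne.symm]
  exact inter_subset_left

lemma card_core {F P : Finset (Fin n → ZMod 2)} (h : SmallSpectrum S k q G)
    (hF : Sunflower S G F P) (h2 : 2 ≤ #F) (hP : P.Nonempty) : 4 * (#P : ℤ) = q := by
  obtain ⟨α, hα, β, hβ, hne⟩ := one_lt_card.mp (by omega : 1 < #F)
  obtain ⟨x, hx⟩ := hP
  rw [← hF.2 α hα β hβ hne]
  exact (h.pair_of_mem (hF.1 α hα) (hF.1 β hβ) hne (hF.core_subset h2 hα hx)
    (hF.core_subset h2 hβ hx)).1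

lemma card_sunflower_le {F P : Finset (Fin n → ZMod 2)}
    (hF : Sunflower S G F P) (Z : Finset (Fin n → ZMod 2)) :
    #(P ∩ Z) + ∑ α ∈ F, #((minority S G α \ P) ∩ Z) ≤ #Z := by
  rw [← card_biUnion, ← card_union_of_disjoint]
  · refine card_le_card (union_subset inter_subset_right (biUnion_subset.mpr fun α _ =>
      inter_subset_right))
  · rw [disjoint_left]
    intro x hx hx'
    simp only [mem_biUnion, mem_inter, mem_sdiff] at hx hx'
    obtain ⟨α, -, h⟩ := hx'
    exact h.1.2 hx.1
  · intro α hα β hβ hne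
    change Disjoint (minority S G α \ P ∩ Z) (minority S G β \ P ∩ Z)
    rw [disjoint_left]
    intro x hx hx'
    simp only [mem_inter, mem_sdiff] at hx hx'
    refine hx.1.2 ?_
    rw [← hF.2 α hα β hβ hne]
    exact mem_inter.mpr ⟨hx.1.1, hx'.1.1⟩

/-- Every minority through a core point of a sunflower with four petals contains the core. -/
lemma core_subset_of_mem {F P : Finset (Fin n → ZMod 2)} (h : SmallSpectrum S k q G)
    (hF : Sunflower S G F P) (h4 : 4 ≤ #F) {x δ : Fin n → ZMod 2} (hx : x ∈ P)
    (hδ : UnitCoef G δ) (hxδ : x ∈ minority S G δ) : P ⊆ minority S G δ := by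
  by_cases hδF : δ ∈ F
  · exact hF.core_subset (by omega) hδF
  have hP := h.card_core hF (by omega) ⟨x, hx⟩
  have hsub := fun α (hα : α ∈ F) => hF.core_subset (by omega) hα
  have hne : ∀ α ∈ F, δ ≠ α := fun α hα h' => hδF (h' ▸ hα)
  have h1 : ∀ α ∈ F, 4 * (#(minority S G α \ P ∩ minority S G δ) : ℤ) +
      4 * #(P ∩ minority S G δ) = q := by
    intro α hα
    rw [← (h.pair_of_mem hδ (hF.1 α hα) (hne α hα) hxδ (hsub α hα hx)).1]
    have h2 : minority S G δ ∩ minority S G α =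
        (minority S G α \ P ∩ minority S G δ) ∪ (P ∩ minority S G δ) := by
      ext y
      have := @hsub α hα y
      simp only [mem_inter, mem_union, mem_sdiff]
      tauto
    rw [h2, card_union_of_disjoint]
    · push_cast; ring
    · rw [disjoint_left]
      intro y hy hy'
      simp only [mem_inter, mem_sdiff] at hy hy'
      tauto
  have h2 := card_sunflower_le hF (minority S G δ)
  have h5 : 4 * (∑ α ∈ F, #(minority S G α \ P ∩ minority S G δ) : ℤ) =
      #F * (q - 4 * #(P ∩ minority S G δ)) := by
    rw [mul_sum, sum_congr rfl fun α hα => eq_sub_of_add_eq (h1 α hα), sum_const, nsmul_eq_mul]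
  have h6 := h.card_minority hδ
  have h7 : (#(P ∩ minority S G δ) : ℤ) ≤ #P := by
    exact_mod_cast card_le_card inter_subset_left
  have h8 : ∃ m : ℤ, 8 * (#(P ∩ minority S G δ) : ℤ) = q * m := by
    obtain ⟨α, hα, β, hβ, hαβ⟩ := one_lt_card.mp (by omega : 1 < #F)
    rw [← hF.2 α hα β hβ hαβ]
    exact ⟨_, h.card_triple (hF.1 α hα) (hF.1 β hβ) hδ⟩
  obtain ⟨m, hm⟩ := h8
  have hq := h.q_pos
  have h9 : (4 : ℤ) ≤ #F := by exact_mod_cast h4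
  have h10 : (#(P ∩ minority S G δ) : ℤ) +
      (∑ α ∈ F, #(minority S G α \ P ∩ minority S G δ) : ℤ) ≤ #(minority S G δ) := by
    exact_mod_cast h2
  have h11 : 4 * (q - 4 * (#(P ∩ minority S G δ) : ℤ)) ≤
      #F * (q - 4 * #(P ∩ minority S G δ)) :=
    mul_le_mul_of_nonneg_right h9 (by linarith)
  have h12 : 2 ≤ m := by
    by_contra h13
    have h14 : m ≤ 1 := by omega
    nlinarith
  have h13 : (#P : ℤ) ≤ #(P ∩ minority S G δ) := by nlinarith
  have h14 := eq_of_subset_of_card_le (inter_subset_left : P ∩ minority S G δ ⊆ P)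
    (by exact_mod_cast h13)
  exact inter_eq_left.mp h14

lemma through_sunflower {F P : Finset (Fin n → ZMod 2)} (h : SmallSpectrum S k q G)
    (hF : Sunflower S G F P) (h4 : 4 ≤ #F) {x : Fin n → ZMod 2} (hx : x ∈ P) :
    Sunflower S G (through S G x) P := by
  have hP := h.card_core hF (by omega) ⟨x, hx⟩
  refine ⟨fun α hα => (mem_through.mp hα).1, fun α hα β hβ hne => ?_⟩
  rw [mem_through] at hα hβ
  refine (eq_of_subset_of_card_le (subset_inter
    (h.core_subset_of_mem hF h4 hx hα.1 hα.2) (h.core_subset_of_mem hF h4 hx hβ.1 hβ.2)) ?_).symm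
  have := (h.pair_of_mem hα.1 hβ.1 hne hα.2 hβ.2).1
  omega

lemma four_flats {F P : Finset (Fin n → ZMod 2)} (h : SmallSpectrum S k q G) (hn : k < n)
    (hF : Sunflower S G F P) (h4 : 4 ≤ #F) (hP : P.Nonempty) :
    k = 4 ∧ ∃ (a : Fin 4 → (Fin n → ZMod 2)) (V : Fin 4 → Submodule (ZMod 2) (Fin n → ZMod 2)),
      (∀ i, Module.finrank (ZMod 2) (V i) = n - k - 1) ∧
      (Pairwise fun i j =>
        Disjoint ((a i + ·) '' (V i : Set (Fin n → ZMod 2)))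
          ((a j + ·) '' (V j : Set (Fin n → ZMod 2)))) ∧
      (S : Set (Fin n → ZMod 2)) = ⋃ i, (a i + ·) '' (V i : Set (Fin n → ZMod 2)) := by
  obtain ⟨x, hx⟩ := hP
  have hPq := h.card_core hF (by omega) ⟨x, hx⟩
  have hB := h.through_sunflower hF h4 hx
  have hq := h.q_pos
  have hFB : #F ≤ #(through S G x) := card_le_card fun α hα =>
    mem_through.mpr ⟨hF.1 α hα, hF.core_subset (by omega) hα hx⟩
  have hsub := fun α (hα : α ∈ through S G x) => hB.core_subset (by omega) hα
  have hxS : x ∈ S := by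
    obtain ⟨α, hα⟩ := card_pos.mp (by omega : 0 < #F)
    exact (mem_minority.mp (hF.core_subset (by omega) hα hx)).1
  have hBk := h.card_through hxS
  have hPS : P ⊆ S := by
    obtain ⟨α, hα⟩ := card_pos.mp (by omega : 0 < #F)
    exact fun y hy => (mem_minority.mp (hF.core_subset (by omega) hα hy)).1
  have hpetal : ∀ α ∈ through S G x, 4 * (#((minority S G α \ P) ∩ S) : ℤ) = q := by
    intro α hα
    have h1 : minority S G α \ P ∩ S = minority S G α \ P :=
      inter_eq_left.mpr fun y hy => (mem_minority.mp (mem_sdiff.mp hy).1).1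
    have h2 := card_sdiff_add_card_eq_card (hsub α hα)
    have h3 := h.card_minority (hB.1 α hα)
    rw [h1]
    omega
  have hsum : 4 * (∑ α ∈ through S G x, #((minority S G α \ P) ∩ S) : ℤ) =
      #(through S G x) * q := by
    rw [mul_sum, sum_congr rfl hpetal, sum_const, nsmul_eq_mul]
  have hle := card_sunflower_le hB S
  rw [inter_eq_left.mpr hPS] at hle
  have hle' : (#P : ℤ) + (∑ α ∈ through S G x, #((minority S G α \ P) ∩ S) : ℤ) ≤ #S := by
    exact_mod_cast hle
  rw [h.card_eq] at hle'
  have h7 : (#(through S G x) : ℤ) ≤ 7 := by nlinarith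
  have hk : k = 4 := by
    have h1 : (2 : ℤ) ^ k < 2 ^ 5 := by norm_num; omega
    have h2 : (2 : ℤ) ^ 3 < 2 ^ k := by norm_num; omega
    have := (pow_lt_pow_iff_right₀ (by norm_num : (1 : ℤ) < 2)).mp h1
    have := (pow_lt_pow_iff_right₀ (by norm_num : (1 : ℤ) < 2)).mp h2
    omega
  have hB7 : #(through S G x) = 7 := by
    rw [hk] at hBk; norm_num at hBk; omega
  refine ⟨hk, ?_⟩
  have hcover : ∀ y ∈ S, ∃ α ∈ through S G x, y ∈ minority S G α := by
    have h1 : P ∪ (through S G x).biUnion (fun α => (minority S G α \ P) ∩ S) = S := by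
      refine eq_of_subset_of_card_le (union_subset hPS
        (biUnion_subset.mpr fun α _ => inter_subset_right)) ?_
      rw [card_union_of_disjoint, card_biUnion]
      · rw [hB7] at hsum
        have := h.card_eq
        have h2 : (#S : ℤ) ≤
          #P + (∑ α ∈ through S G x, #((minority S G α \ P) ∩ S) : ℤ) := by
          push_cast at hsum
          linarith
        exact_mod_cast h2
      · intro α hα β hβ hne
        change Disjoint (minority S G α \ P ∩ S) (minority S G β \ P ∩ S)
        rw [disjoint_left]
        intro y hy hy'
        simp only [mem_inter, mem_sdiff] at hy hy'
        refine hy.1.2 ?_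
        rw [← hB.2 α hα β hβ hne]
        exact mem_inter.mpr ⟨hy.1.1, hy'.1.1⟩
      · rw [disjoint_left]
        intro y hy hy'
        simp only [mem_biUnion, mem_inter, mem_sdiff] at hy'
        obtain ⟨α, -, h'⟩ := hy'
        exact h'.1.2 hy
    intro y hy
    rw [← h1, mem_union, mem_biUnion] at hy
    rcases hy with hy | ⟨α, hα, hy⟩
    · obtain ⟨α, hα⟩ := card_pos.mp (by omega : 0 < #(through S G x))
      exact ⟨α, hα, hsub α hα hy⟩
    · exact ⟨α, hα, (mem_sdiff.mp (mem_inter.mp hy).1).1⟩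
  let e : Fin 7 ≃ through S G x := (finCongr hB7.symm).trans (through S G x).equivFin.symm
  have heU : ∀ i, UnitCoef G (e i : Fin n → ZMod 2) := fun i => hB.1 _ (e i).2
  have hene : ∀ i j, i ≠ j → (e i : Fin n → ZMod 2) ≠ e j := fun i j hij h' =>
    hij (e.injective (Subtype.ext h'))
  have headd : ∀ i j, i ≠ j → G ((e i : Fin n → ZMod 2) + e j) =
      G (e i : Fin n → ZMod 2) * G (e j : Fin n → ZMod 2) := fun i j hij =>
    (h.pair_of_mem (heU i) (heU j) (hene i j hij) (hsub _ (e i).2 hx) (hsub _ (e j).2 hx)).2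
  have hex : ∀ y, ∀ i j l, i ≠ j → y ∈ minority S G (e i) → y ∈ minority S G (e j) →
      y ∈ minority S G (e l) := by
    intro y i j l hij hi hj
    refine hsub _ (e l).2 ?_
    rw [← hB.2 _ (e i).2 _ (e j).2 (hene i j hij)]
    exact mem_inter.mpr ⟨hi, hj⟩
  have hcov : ∀ y ∈ S, ∃ i, y ∈ minority S G (e i) := by
    intro y hy
    obtain ⟨α, hα, h'⟩ := hcover y hy
    exact ⟨e.symm ⟨α, hα⟩, by simpa using h'⟩
  let w : Fin 4 → (Fin n → ZMod 2) :=
    ![(e 0 : Fin n → ZMod 2), (e 1 : Fin n → ZMod 2) + e 2, (e 3 : Fin n → ZMod 2) + e 4,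
      (e 5 : Fin n → ZMod 2) + e 6]
  have hw : ∀ i, UnitCoef G (w i) := by
    intro i
    fin_cases i
    · exact heU 0
    · exact unitCoef_add (heU 1) (heU 2) (headd 1 2 (by decide))
    · exact unitCoef_add (heU 3) (heU 4) (headd 3 4 (by decide))
    · exact unitCoef_add (heU 5) (heU 6) (headd 5 6 (by decide))
  have hm0 : ∀ y, y ∈ minority S G (w 0) ↔ y ∈ minority S G (e 0) := fun y => Iff.rfl
  have hm1 : ∀ y, y ∈ minority S G (w 1) ↔ _ :=
    mem_minority_add (heU 1) (heU 2) (headd 1 2 (by decide))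
  have hm2 : ∀ y, y ∈ minority S G (w 2) ↔ _ :=
    mem_minority_add (heU 3) (heU 4) (headd 3 4 (by decide))
  have hm3 : ∀ y, y ∈ minority S G (w 3) ↔ _ :=
    mem_minority_add (heU 5) (heU 6) (headd 5 6 (by decide))
  have hlift : ∀ y i, y ∈ minority S G (w i) → ∃ j : Fin 7, (j.val + 1) / 2 = i.val ∧
      y ∈ minority S G (e j) ∧ ∃ l, y ∉ minority S G (e l) ∨ i = 0 := by
    intro y i hy
    fin_cases i
    · exact ⟨0, rfl, hy, 0, Or.inr rfl⟩
    · rcases (hm1 y).mp hy with h' | h'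
      exacts [⟨1, rfl, h'.1, 2, Or.inl h'.2⟩, ⟨2, rfl, h'.2, 1, Or.inl h'.1⟩]
    · rcases (hm2 y).mp hy with h' | h'
      exacts [⟨3, rfl, h'.1, 4, Or.inl h'.2⟩, ⟨4, rfl, h'.2, 3, Or.inl h'.1⟩]
    · rcases (hm3 y).mp hy with h' | h'
      exacts [⟨5, rfl, h'.1, 6, Or.inl h'.2⟩, ⟨6, rfl, h'.2, 5, Or.inl h'.1⟩]
  choose a V hV hflat using fun i => h.minority_flat hn (hw i)
  refine ⟨a, V, hV, ?_, ?_⟩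
  · intro i j hij
    rw [← hflat, ← hflat, Set.disjoint_left]
    intro y hy hy'
    rw [mem_coe] at hy hy'
    obtain ⟨i', hi', hyi, l, hl⟩ := hlift y i hy
    obtain ⟨j', hj', hyj, l', hl'⟩ := hlift y j hy'
    have hne : i' ≠ j' := by
      rintro rfl
      exact hij (Fin.ext (hi'.symm.trans hj'))
    have hall := fun l => hex y i' j' l hne hyi hyj
    rcases hl with hl | hl
    · exact hl (hall l)
    rcases hl' with hl' | hl'
    · exact hl' (hall l')
    · exact hij (hl.trans hl'.symm)
  · ext y
    simp only [← hflat, Set.mem_iUnion, mem_coe]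
    constructor
    · intro hy
      by_cases h0 : y ∈ minority S G (e 0)
      · exact ⟨0, h0⟩
      · have hone : ∀ i j, i ≠ j → y ∈ minority S G (e i) → y ∉ minority S G (e j) :=
          fun i j hij hi hj => h0 (hex y i j 0 hij hi hj)
        obtain ⟨i, hi⟩ := hcov y hy
        fin_cases i
        · exact absurd hi h0
        · exact ⟨1, (hm1 y).mpr (Or.inl ⟨hi, hone 1 2 (by decide) hi⟩)⟩
        · exact ⟨1, (hm1 y).mpr (Or.inr ⟨hone 2 1 (by decide) hi, hi⟩)⟩
        · exact ⟨2, (hm2 y).mpr (Or.inl ⟨hi, hone 3 4 (by decide) hi⟩)⟩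
        · exact ⟨2, (hm2 y).mpr (Or.inr ⟨hone 4 3 (by decide) hi, hi⟩)⟩
        · exact ⟨3, (hm3 y).mpr (Or.inl ⟨hi, hone 5 6 (by decide) hi⟩)⟩
        · exact ⟨3, (hm3 y).mpr (Or.inr ⟨hone 6 5 (by decide) hi, hi⟩)⟩
    · rintro ⟨i, hi⟩
      exact (mem_minority.mp hi).1

lemma exists_sunflower_of_pairwise {α β δ ε : Fin n → ZMod 2} {P : Finset (Fin n → ZMod 2)}
    (hα : UnitCoef G α) (hβ : UnitCoef G β) (hδ : UnitCoef G δ) (hε : UnitCoef G ε)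
    (n1 : α ≠ β) (n2 : α ≠ δ) (n3 : α ≠ ε) (n4 : β ≠ δ) (n5 : β ≠ ε) (n6 : δ ≠ ε)
    (p1 : minority S G α ∩ minority S G β = P) (p2 : minority S G α ∩ minority S G δ = P)
    (p3 : minority S G α ∩ minority S G ε = P) (p4 : minority S G β ∩ minority S G δ = P)
    (p5 : minority S G β ∩ minority S G ε = P) (p6 : minority S G δ ∩ minority S G ε = P)
    (hP : P.Nonempty) : ∃ F P, Sunflower S G F P ∧ 4 ≤ #F ∧ P.Nonempty := by
  refine ⟨{α, β, δ, ε}, P, ⟨?_, ?_⟩, ?_, hP⟩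
  · simp only [mem_insert, mem_singleton]
    rintro _ (rfl | rfl | rfl | rfl) <;> assumption
  · simp only [mem_insert, mem_singleton]
    rintro _ (rfl | rfl | rfl | rfl) _ (rfl | rfl | rfl | rfl) hne <;>
      first
        | exact absurd rfl hne
        | assumption
        | (rw [inter_comm]; assumption)
  · rw [card_insert_of_notMem, card_insert_of_notMem, card_insert_of_notMem, card_singleton] <;>
      simp [*]

/-- A minority meeting just one of three minorities with common core, in the complement of the
core, gives rise to a sunflower with four petals. -/
lemma exists_sunflower_of_disjoint (h : SmallSpectrum S k q G) {α β δ ε : Fin n → ZMod 2}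
    {P : Finset (Fin n → ZMod 2)}
    (hα : UnitCoef G α) (hβ : UnitCoef G β) (hδ : UnitCoef G δ) (hε : UnitCoef G ε)
    (g1 : G (α + β) = G α * G β) (g2 : G (α + δ) = G α * G δ) (hβδ : β ≠ δ)
    (p1 : minority S G α ∩ minority S G β = P) (p2 : minority S G α ∩ minority S G δ = P)
    (p3 : minority S G β ∩ minority S G δ = P) (hPq : 4 * (#P : ℤ) = q)
    (c1 : 4 * (#(minority S G ε ∩ minority S G α) : ℤ) = q)
    (c2 : minority S G ε ∩ minority S G β = ∅)
    (hεα : ε ≠ α) (hεαβ : ε ≠ α + β) (hεαδ : ε ≠ α + δ) :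
    ∃ F P, Sunflower S G F P ∧ 4 ≤ #F ∧ P.Nonempty := by
  have hq := h.q_pos
  have i1 : ∀ y, y ∈ P ↔ y ∈ minority S G α ∧ y ∈ minority S G β := fun y => by
    rw [← p1, mem_inter]
  have i2 : ∀ y, y ∈ P ↔ y ∈ minority S G α ∧ y ∈ minority S G δ := fun y => by
    rw [← p2, mem_inter]
  have i3 : ∀ y, y ∈ P ↔ y ∈ minority S G β ∧ y ∈ minority S G δ := fun y => by
    rw [← p3, mem_inter]
  have i4 : ∀ y, ¬ (y ∈ minority S G ε ∧ y ∈ minority S G β) := fun y => by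
    rw [← mem_inter, c2]; simp
  have hUβ := unitCoef_add hα hβ g1
  have hUδ := unitCoef_add hα hδ g2
  have mβ := mem_minority_add (S := S) hα hβ g1
  have mδ := mem_minority_add (S := S) hα hδ g2
  set D := minority S G α \ P with hD
  have hDq : 4 * (#D : ℤ) = q := by
    have h1 := card_sdiff_add_card_eq_card (fun y hy => ((i1 y).mp hy).1 : P ⊆ minority S G α)
    have h2 := h.card_minority hα
    rw [hD]
    omega
  have hDne : D.Nonempty := by
    rw [← card_pos]; omega
  have d1 : minority S G ε ∩ minority S G α = D := by
    refine eq_of_subset_of_card_le (fun y hy => ?_) (by omega)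
    rw [mem_inter] at hy
    refine mem_sdiff.mpr ⟨hy.2, fun h' => i4 y ⟨hy.1, ((i1 y).mp h').2⟩⟩
  have d2 : minority S G α ∩ minority S G (α + β) = D := by
    ext y
    have j := i1 y
    rw [mem_inter, mβ, hD, mem_sdiff]
    grind
  have d3 : minority S G α ∩ minority S G (α + δ) = D := by
    ext y
    have j := i2 y
    rw [mem_inter, mδ, hD, mem_sdiff]
    grind
  have d4 : minority S G (α + β) ∩ minority S G (α + δ) = D := by
    ext y
    have j1 := i1 y
    have j2 := i2 y
    have j3 := i3 y
    rw [mem_inter, mδ, mβ, hD, mem_sdiff]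
    grind
  have dε : ∀ ζ, UnitCoef G ζ → ε ≠ ζ → D ⊆ minority S G ζ →
      minority S G ε ∩ minority S G ζ = D := by
    intro ζ hζ hne hsub
    have hsubε : D ⊆ minority S G ε := by
      rw [← d1]; exact inter_subset_left
    obtain ⟨y, hy⟩ := hDne
    have := (h.pair_of_mem hε hζ hne (hsubε hy) (hsub hy)).1
    exact (eq_of_subset_of_card_le (subset_inter hsubε hsub) (by omega)).symm
  have d5 := dε _ hUβ hεαβ (by rw [← d2]; exact inter_subset_right)
  have d6 := dε _ hUδ hεαδ (by rw [← d3]; exact inter_subset_right)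
  have n1 : α ≠ α + β := fun h' => h.ne_zero hβ (left_eq_add.mp h')
  have n2 : α ≠ α + δ := fun h' => h.ne_zero hδ (left_eq_add.mp h')
  have n3 : α + β ≠ α + δ := fun h' => hβδ (add_left_cancel h')
  exact exists_sunflower_of_pairwise hε hα hUβ hUδ hεα hεαβ hεαδ n1 n2 n3 d1 d5 d6 d2 d3 d4 hDne

lemma sign_identity {a b d e : ℤ} {p : Prop} [Decidable (e = -1 ∧ p)] [Decidable (e = -1 ∧ a = -1)]
    [Decidable (e = -1 ∧ b = -1)] [Decidable (e = -1 ∧ d = -1)]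
    (ha : a = 1 ∨ a = -1) (hb : b = 1 ∨ b = -1) (hd : d = 1 ∨ d = -1) (he : e = 1 ∨ e = -1)
    (i1 : p ↔ a = -1 ∧ b = -1) (i2 : p ↔ a = -1 ∧ d = -1) (i3 : p ↔ b = -1 ∧ d = -1) :
    (1 - e) * (1 - a * b * d) + 8 * (if e = -1 ∧ p then 1 else 0) =
      4 * (if e = -1 ∧ a = -1 then 1 else 0) + 4 * (if e = -1 ∧ b = -1 then 1 else 0) +
        4 * (if e = -1 ∧ d = -1 then 1 else 0) := by
  rcases ha with rfl | rfl <;> rcases hb with rfl | rfl <;> rcases hd with rfl | rfl <;>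
    rcases he with rfl | rfl <;> norm_num at i1 i2 i3 ⊢ <;> simp_all

/-- If three minorities meet pairwise in the same core, then either the sum of their frequencies
preserves the unit frequencies or there is a sunflower with four petals. -/
lemma invariant_or_sunflower (h : SmallSpectrum S k q G) {α β δ x : Fin n → ZMod 2}
    (hα : α ∈ through S G x) (hβ : β ∈ through S G x) (hδ : δ ∈ through S G x)
    (hαβ : α ≠ β) (hαδ : α ≠ δ) (hβδ : β ≠ δ) (h0 : G (α + β + δ) = 0) :
    Invariant G ∨ ∃ F P, Sunflower S G F P ∧ 4 ≤ #F ∧ P.Nonempty := by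
  rw [mem_through] at hα hβ hδ
  obtain ⟨hα, hxα⟩ := hα
  obtain ⟨hβ, hxβ⟩ := hβ
  obtain ⟨hδ, hxδ⟩ := hδ
  have hq := h.q_pos
  obtain ⟨c1, g1⟩ := h.pair_of_mem hα hβ hαβ hxα hxβ
  obtain ⟨c2, g2⟩ := h.pair_of_mem hα hδ hαδ hxα hxδ
  obtain ⟨c3, g3⟩ := h.pair_of_mem hβ hδ hβδ hxβ hxδ
  have ht := h.card_triple hα hβ hδ
  rw [h0, g1, g2, g3] at ht
  have ht' : 4 * (#(minority S G α ∩ minority S G β ∩ minority S G δ) : ℤ) = q := by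
    have e1 : G α * G β * (G α * G β) = 1 := by
      linear_combination G β * G β * hα.sq + hβ.sq
    have e2 : G α * G δ * (G α * G δ) = 1 := by
      linear_combination G δ * G δ * hα.sq + hδ.sq
    have e3 : G β * G δ * (G β * G δ) = 1 := by
      linear_combination G δ * G δ * hβ.sq + hδ.sq
    rw [e1, e2, e3] at ht
    linarith
  clear ht
  set P := minority S G α ∩ minority S G β ∩ minority S G δ with hP
  have p1 : minority S G α ∩ minority S G β = P := by
    refine (eq_of_subset_of_card_le (fun y hy => ?_) (by omega)).symm
    simp only [hP, mem_inter] at hy ⊢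
    tauto
  have p2 : minority S G α ∩ minority S G δ = P := by
    refine (eq_of_subset_of_card_le (fun y hy => ?_) (by omega)).symm
    simp only [hP, mem_inter] at hy ⊢
    tauto
  have p3 : minority S G β ∩ minority S G δ = P := by
    refine (eq_of_subset_of_card_le (fun y hy => ?_) (by omega)).symm
    simp only [hP, mem_inter] at hy ⊢
    tauto
  set γ := α + β + δ with hγ
  by_cases hinv : ∀ ε, UnitCoef G ε → UnitCoef G (ε + γ)
  · refine Or.inl ⟨γ, fun h' => ?_, h0, hinv⟩
    rw [h', h.zero] at h0
    omega
  right
  obtain ⟨ε, hinv⟩ := not_forall.mp hinv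
  obtain ⟨hε, hnot⟩ := Classical.not_imp.mp hinv
  have hεγ : G (ε + γ) = 0 := by
    by_contra h'
    refine hnot (h.unitCoef_of_ne (fun h'' => ?_) h')
    rw [vec_add_eq_zero] at h''
    rw [h''] at hε
    rcases hε with h3 | h3 <;> omega
  have hUαβ := unitCoef_add hα hβ g1
  have hUαδ := unitCoef_add hα hδ g2
  have hUβδ := unitCoef_add hβ hδ g3
  have hshift : ∀ ζ η, UnitCoef G η → ζ + η = γ → ε ≠ ζ := by
    rintro ζ η hη hsum rfl
    rw [← hsum, vec_add_cancel] at hnot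
    exact hnot hη
  have nα := hshift α (β + δ) hUβδ (by rw [hγ]; abel)
  have nβ := hshift β (α + δ) hUαδ (by rw [hγ]; abel)
  have nδ := hshift δ (α + β) hUαβ (by rw [hγ]; abel)
  have nαβ := hshift (α + β) δ hδ rfl
  have nαδ := hshift (α + δ) β hβ (by rw [hγ]; abel)
  have nβδ := hshift (β + δ) α hα (by rw [hγ]; abel)
  have hcount : q + 8 * (#(minority S G ε ∩ P) : ℤ) =
      4 * #(minority S G ε ∩ minority S G α) + 4 * #(minority S G ε ∩ minority S G β) +
        4 * #(minority S G ε ∩ minority S G δ) := by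
    have hq' : q = ∑ x ∈ S, (1 - G ε * chi ε x - G α * G β * G δ * chi γ x +
        G ε * (G α * G β * G δ) * chi (ε + γ) x) := by
      simp only [sum_add_distrib, sum_sub_distrib, ← mul_sum]
      simp only [← charSum.eq_1, h.charSum_eq, sum_const, nsmul_one, h.card_eq, h0, hεγ]
      linear_combination q * hε.sq
    have hcard : ∀ ζ, (#(minority S G ε ∩ minority S G ζ) : ℤ) =
        ∑ x ∈ S, if x ∈ minority S G ε ∧ x ∈ minority S G ζ then 1 else 0 := by
      intro ζ
      rw [← natCast_card_filter]
      congr 2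
      ext y
      simp only [mem_inter, mem_filter, mem_minority]
      grind
    have hcardP : (#(minority S G ε ∩ P) : ℤ) =
        ∑ x ∈ S, if x ∈ minority S G ε ∧ x ∈ P then 1 else 0 := by
      rw [← natCast_card_filter]
      congr 2
      ext y
      simp only [mem_inter, mem_filter, mem_minority]
      grind
    rw [hcardP, hcard, hcard, hcard]
    nth_rewrite 1 [hq']
    simp only [mul_sum, ← sum_add_distrib]
    refine sum_congr rfl fun y hy => ?_
    have i1 : y ∈ P ↔ y ∈ minority S G α ∧ y ∈ minority S G β := by rw [← p1, mem_inter]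
    have i2 : y ∈ P ↔ y ∈ minority S G α ∧ y ∈ minority S G δ := by rw [← p2, mem_inter]
    have i3 : y ∈ P ↔ y ∈ minority S G β ∧ y ∈ minority S G δ := by rw [← p3, mem_inter]
    have hprod : 1 - G ε * chi ε y - G α * G β * G δ * chi γ y +
        G ε * (G α * G β * G δ) * chi (ε + γ) y =
        (1 - G ε * chi ε y) * (1 - (G α * chi α y) * (G β * chi β y) * (G δ * chi δ y)) := by
      rw [hγ]
      simp only [chi_add_left]
      ring
    rw [hprod]
    simp only [mem_minority, hy, true_and] at i1 i2 i3 ⊢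
    exact sign_identity (hα.mul_chi y) (hβ.mul_chi y) (hδ.mul_chi y) (hε.mul_chi y) i1 i2 i3
  have hPne : P.Nonempty := by
    rw [← card_pos]; omega
  have hle : ∀ ζ, P ⊆ minority S G ζ →
      #(minority S G ε ∩ P) ≤ #(minority S G ε ∩ minority S G ζ) :=
    fun ζ hζ => card_le_card (inter_subset_inter_left hζ)
  have sα : P ⊆ minority S G α := by rw [← p1]; exact inter_subset_left
  have sβ : P ⊆ minority S G β := by rw [← p1]; exact inter_subset_right
  have sδ : P ⊆ minority S G δ := by rw [← p2]; exact inter_subset_right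
  have lα := hle α sα
  have lβ := hle β sβ
  have lδ := hle δ sδ
  have g1' : G (β + α) = G β * G α := by rw [add_comm, g1, mul_comm]
  have g2' : G (δ + α) = G δ * G α := by rw [add_comm, g2, mul_comm]
  have g3' : G (δ + β) = G δ * G β := by rw [add_comm, g3, mul_comm]
  rcases h.pair_cases hε hα nα with ⟨eα, -⟩ | ⟨eα, -⟩ <;>
    rcases h.pair_cases hε hβ nβ with ⟨eβ, -⟩ | ⟨eβ, -⟩ <;>
    rcases h.pair_cases hε hδ nδ with ⟨eδ, -⟩ | ⟨eδ, -⟩ <;>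
    first
      | (exfalso
         simp only [eα, eβ, eδ, card_empty] at hcount lα lβ lδ
         omega)
      | skip
  · exact h.exists_sunflower_of_disjoint hδ hα hβ hε g2' g3' hαβ (by rwa [inter_comm])
      (by rwa [inter_comm]) p1 ht' eδ eα nδ (by rwa [add_comm]) (by rwa [add_comm])
  · exact h.exists_sunflower_of_disjoint hβ hα hδ hε g1' g3 hαδ (by rwa [inter_comm])
      p3 p2 ht' eβ eα nβ (by rwa [add_comm]) nβδ
  · exact h.exists_sunflower_of_disjoint hα hβ hδ hε g1 g2 hβδ p1 p2 p3 ht' eα eβ nα nαβ nαδ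
  · have hPε : P ⊆ minority S G ε := by
      have := eq_of_subset_of_card_le (inter_subset_right : minority S G ε ∩ P ⊆ P) (by omega)
      rw [← this]
      exact inter_subset_left
    have hmeet : ∀ ζ, P ⊆ minority S G ζ → 4 * (#(minority S G ε ∩ minority S G ζ) : ℤ) = q →
        minority S G ε ∩ minority S G ζ = P := fun ζ hζ hc =>
      (eq_of_subset_of_card_le (subset_inter hPε hζ) (by omega)).symm
    exact exists_sunflower_of_pairwise hε hα hβ hδ nα nβ nδ hαβ hαδ hβδ (hmeet α sα eα)
      (hmeet β sβ eβ) (hmeet δ sδ eδ) p1 p2 p3 hPne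

/-- Some frequency preserves the unit frequencies, or there is a sunflower with four petals. -/
lemma dichotomy (h : SmallSpectrum S k q G) (hS : S.Nonempty) (hSu : S ≠ univ) :
    Invariant G ∨ ∃ F P, Sunflower S G F P ∧ 4 ≤ #F ∧ P.Nonempty := by
  obtain ⟨x, hx⟩ := hS
  have hB := h.card_through hx
  have hA := h.card_unitCoef
  have hq := h.q_pos
  have hk0 : k ≠ 0 := by
    rintro rfl
    rw [pow_zero] at hB; omega
  have hk1 : k ≠ 1 := by
    rintro rfl
    refine hSu (eq_univ_of_card _ ?_)
    have h1 := h.card_eq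
    have h2 := h.scale
    have h3 : (#S : ℤ) = 2 ^ n := by linarith
    simpa using (by exact_mod_cast h3 : #S = 2 ^ n)
  by_cases hk2 : k = 2
  · left
    subst hk2
    have hone : ∀ y ∈ S, #(through S G y) = 1 := fun y hy => by
      have := h.card_through hy
      norm_num at this; omega
    have hA4 : #(univ.filter fun α => UnitCoef G α) = 4 := by
      norm_num at hA; omega
    have hdisj : ∀ α β, UnitCoef G α → UnitCoef G β → α ≠ β →
        minority S G α ∩ minority S G β = ∅ ∧ G (α + β) = 0 := by
      intro α β hα hβ hne
      refine (h.pair_cases hα hβ hne).resolve_right fun h' => ?_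
      obtain ⟨y, hy⟩ : (minority S G α ∩ minority S G β).Nonempty := by
        rw [← card_pos]; omega
      rw [mem_inter] at hy
      refine hne (card_le_one.mp (hone y (mem_minority.mp hy.1).1).le α ?_ β ?_)
      exacts [mem_through.mpr ⟨hα, hy.1⟩, mem_through.mpr ⟨hβ, hy.2⟩]
    obtain ⟨α, hα, β, hβ, hne⟩ := one_lt_card.mp (by omega :
      1 < #(univ.filter fun α => UnitCoef G α))
    rw [mem_filter] at hα hβ
    replace hα := hα.2
    replace hβ := hβ.2
    refine ⟨α + β, fun h' => hne (vec_add_eq_zero.mp h'), (hdisj α β hα hβ hne).2, ?_⟩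
    intro δ hδ
    by_cases hδα : δ = α
    · rwa [hδα, vec_add_cancel]
    by_cases hδβ : δ = β
    · rwa [hδβ, add_comm α, vec_add_cancel]
    have h1 := h.card_triple hα hβ hδ
    have h2 := hdisj α β hα hβ hne
    have h3 := hdisj α δ hα hδ (Ne.symm hδα)
    have h4 := hdisj β δ hβ hδ (Ne.symm hδβ)
    rw [h2.1, h2.2, h3.2, h4.2, empty_inter, card_empty] at h1
    rw [add_comm]
    refine h.unitCoef_of_ne ?_ ?_
    · intro h5
      rw [h5, h.zero] at h1
      have h6 : q = 0 ∨ -1 - G α * G β * G δ * 2 = 0 := by simpa using h1.symm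
      rcases hα with h' | h' <;> rcases hβ with h'' | h'' <;> rcases hδ with h3' | h3' <;>
        rw [h', h'', h3'] at h6 <;> omega
    · intro h5
      rw [h5] at h1
      push_cast at h1
      linarith
  obtain ⟨j, rfl⟩ : ∃ j, k = j + 3 := ⟨k - 3, by omega⟩
  have hpow : (2 : ℤ) ^ (j + 3) = 8 * 2 ^ j := by ring
  have hpos : (0 : ℤ) < 2 ^ j := by positivity
  have hodd : ∃ m : ℕ, #(through S G x) = 2 * m + 1 := ⟨(#(through S G x) - 1) / 2, by omega⟩
  obtain ⟨α, hα, β, hβ, hne⟩ := one_lt_card.mp (by omega : 1 < #(through S G x))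
  by_cases hex : ∃ δ ∈ through S G x, δ ≠ α ∧ δ ≠ β ∧ G (α + β + δ) = 0
  · obtain ⟨δ, hδ, hδα, hδβ, h0⟩ := hex
    exact h.invariant_or_sunflower hα hβ hδ hne hδα.symm hδβ.symm h0
  exfalso
  push Not at hex
  have hclosed : ∀ δ ∈ through S G x, α + β + δ ∈ through S G x := by
    intro δ hδ
    by_cases hδα : δ = α
    · rwa [hδα, add_comm α β, add_assoc, vec_add_self, add_zero]
    by_cases hδβ : δ = β
    · rwa [hδβ, add_assoc, vec_add_self, add_zero]
    have hG := hex δ hδ hδα hδβ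
    rw [mem_through] at hα hβ hδ
    obtain ⟨c1, g1⟩ := h.pair_of_mem hα.1 hβ.1 hne hα.2 hβ.2
    obtain ⟨c2, g2⟩ := h.pair_of_mem hα.1 hδ.1 (Ne.symm hδα) hα.2 hδ.2
    obtain ⟨c3, g3⟩ := h.pair_of_mem hβ.1 hδ.1 (Ne.symm hδβ) hβ.2 hδ.2
    have hαβδ : α + β ≠ δ := by
      rintro rfl
      have := (mem_minority_add hα.1 hβ.1 g1 x).mp hδ.2
      have := hα.2
      have := hβ.2
      tauto
    have hU := h.unitCoef_of_ne (fun h' => hαβδ (vec_add_eq_zero.mp h')) hG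
    have hg : G (α + β + δ) = G (α + β) * G δ :=
      ((h.pair_cases (unitCoef_add hα.1 hβ.1 g1) hδ.1 hαβδ).resolve_left fun h' => hG h'.2).2
    refine mem_through.mpr ⟨hU, ?_⟩
    rw [mem_minority_add (unitCoef_add hα.1 hβ.1 g1) hδ.1 hg, mem_minority_add hα.1 hβ.1 g1]
    have := hα.2
    have := hβ.2
    have := hδ.2
    tauto
  have hsum : ∑ δ ∈ through S G x, (1 : ZMod 2) = 0 := by
    refine sum_involution (fun δ _ => α + β + δ) (fun _ _ => by decide) ?_
      (fun δ hδ => hclosed δ hδ) (fun δ _ => vec_add_cancel _ _)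
    intro δ _ _ h'
    exact hne (vec_add_eq_zero.mp (add_eq_right.mp h'))
  obtain ⟨m, hm⟩ := hodd
  rw [sum_const, nsmul_one, ZMod.natCast_eq_zero_iff] at hsum
  omega

end SmallSpectrum

end Spectrum

/-- Main Theorem. -/
theorem stmt_15 {n k : ℕ} (hk : 1 ≤ k) (hn : k < n) (f : (Fin n → ZMod 2) → ℝ)
    (hf : ∀ x, f x = 0 ∨ f x = 1)
    (hnt0 : ∃ x, f x = 1) (hnt1 : ∃ x, f x = 0)
    (hcoef : ∀ α : Fin n → ZMod 2,
      fc f α = 0 ∨ fc f α = 1 / 2 ^ k ∨ fc f α = -(1 / 2 ^ k) ∨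
      fc f α = 2 / 2 ^ k ∨ fc f α = -(2 / 2 ^ k)) :
    (fc f 0 = 1 / 2 ^ k →
      ∃ (a : Fin n → ZMod 2) (V : Submodule (ZMod 2) (Fin n → ZMod 2)),
        Module.finrank (ZMod 2) V = n - k ∧
        {x | f x = 1} = (a + ·) '' (V : Set (Fin n → ZMod 2))) ∧
    (fc f 0 = 2 / 2 ^ k →
      (∀ (a : Fin n → ZMod 2) (V : Submodule (ZMod 2) (Fin n → ZMod 2)),
        {x | f x = 1} ⊆ (a + ·) '' (V : Set (Fin n → ZMod 2)) → V = ⊤) →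
      ((∃ (a b : Fin n → ZMod 2) (V W : Submodule (ZMod 2) (Fin n → ZMod 2)),
          Module.finrank (ZMod 2) V = n - k ∧ Module.finrank (ZMod 2) W = n - k ∧
          Disjoint ((a + ·) '' (V : Set (Fin n → ZMod 2)))
            ((b + ·) '' (W : Set (Fin n → ZMod 2))) ∧
          {x | f x = 1} =
            (a + ·) '' (V : Set (Fin n → ZMod 2)) ∪ (b + ·) '' (W : Set (Fin n → ZMod 2))) ∨
        (k = 4 ∧
          ∃ (a : Fin 4 → (Fin n → ZMod 2)) (V : Fin 4 → Submodule (ZMod 2) (Fin n → ZMod 2)),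
            (∀ i, Module.finrank (ZMod 2) (V i) = n - k - 1) ∧
            (Pairwise fun i j =>
              Disjoint ((a i + ·) '' (V i : Set (Fin n → ZMod 2)))
                ((a j + ·) '' (V j : Set (Fin n → ZMod 2)))) ∧
            {x | f x = 1} = ⋃ i, (a i + ·) '' (V i : Set (Fin n → ZMod 2))))) := by
  set S : Finset (Fin n → ZMod 2) := univ.filter fun x => f x = 1 with hS
  have hSset : {x | f x = 1} = (S : Set (Fin n → ZMod 2)) := by ext x; simp [hS]
  have hfc : ∀ α, fc f α = (charSum S α : ℝ) / 2 ^ n := by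
    intro α
    rw [fc, charSum, hS, sum_filter]
    push_cast
    congr 1
    refine sum_congr rfl fun x _ => ?_
    rcases hf x with h | h <;> simp [h, chi]
  obtain ⟨d, rfl⟩ : ∃ d, n = k + d := ⟨n - k, by omega⟩
  have hpk : (2 : ℝ) ^ k ≠ 0 := by positivity
  have hpd : (2 : ℝ) ^ d ≠ 0 := by positivity
  have hconv : ∀ α (g : ℤ), fc f α = g / 2 ^ k → charSum S α = 2 ^ d * g := by
    intro α g h
    rw [hfc, pow_add] at h
    field_simp at h
    exact_mod_cast h
  have hex : ∀ α, ∃ g : ℤ, charSum S α = 2 ^ d * g ∧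
      (g = 0 ∨ g = 1 ∨ g = -1 ∨ g = 2 ∨ g = -2) := by
    intro α
    rcases hcoef α with h | h | h | h | h
    · exact ⟨0, hconv α 0 (by rw [h]; simp), by simp⟩
    · exact ⟨1, hconv α 1 (by rw [h]; simp), by simp⟩
    · exact ⟨-1, hconv α (-1) (by rw [h]; push_cast; ring), by simp⟩
    · exact ⟨2, hconv α 2 (by rw [h]; simp), by simp⟩
    · exact ⟨-2, hconv α (-2) (by rw [h]; push_cast; ring), by simp⟩
  choose G hG hGv using hex
  have hq : (0 : ℤ) < 2 ^ d := by positivity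
  rw [hSset]
  refine ⟨fun h0 => ?_, fun h0 hirr => ?_⟩
  · have hc0 := hconv 0 1 (by rw [h0]; simp)
    rw [charSum_zero, mul_one] at hc0
    have hcard : #S = 2 ^ (k + d - k) := by
      rw [Nat.add_sub_cancel_left]; exact_mod_cast hc0
    refine exists_flat hcard fun α => ?_
    have habs := abs_charSum_le S α
    rw [hc0, hG] at *
    rw [abs_le] at habs
    rcases hGv α with h | h | h | h | h <;> rw [h] at habs ⊢
    · simp
    · simp
    · simp
    · linarith
    · linarith
  · have hc0 := hconv 0 2 (by rw [h0]; simp)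
    have hne : S.Nonempty := by
      obtain ⟨x, hx⟩ := hnt0
      exact ⟨x, by simp [hS, hx]⟩
    have hSu : S ≠ univ := by
      obtain ⟨x, hx⟩ := hnt1
      intro h
      have : x ∈ S := h ▸ mem_univ x
      simp [hS, hx] at this
    have hconst : ∀ α e, (e = 1 ∨ e = -1) → charSum S α = e * #S → α = 0 := by
      intro α e he hsum
      by_contra hα
      obtain ⟨i, hi⟩ := Function.ne_iff.mp hα
      obtain ⟨a, ha⟩ := hne
      let L : (Fin (k + d) → ZMod 2) →ₗ[ZMod 2] ZMod 2 := Fintype.linearCombination (ZMod 2) α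
      have hL : ∀ x, L x = ∑ i, α i * x i := by
        intro x
        simp [L, Fintype.linearCombination_apply, mul_comm]
      have htop := hirr a (LinearMap.ker L) (by
        intro x hx
        refine ⟨a + x, ?_, vec_add_cancel a x⟩
        change L (a + x) = 0
        rw [hL]
        apply eq_zero_of_chi_eq_one
        rw [chi_add_right, chi_eq_of_charSum he hsum ha, chi_eq_of_charSum he hsum hx]
        rcases he with rfl | rfl <;> norm_num)
      have hker : L (Pi.single i 1) = 0 := by
        rw [← LinearMap.mem_ker, htop]; trivial
      rw [hL] at hker
      simp [Pi.single_apply] at hker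
      exact hi (by simpa using hker)
    have hcard : (#S : ℤ) = 2 ^ d * 2 := by rw [← charSum_zero, hc0]
    have hspec : SmallSpectrum S k (2 ^ d) G :=
      { q_pos := hq
        scale := by rw [pow_add, mul_comm]
        zero := by
          have := hG 0
          rw [hc0] at this
          exact (mul_left_cancel₀ hq.ne' this).symm
        charSum_eq := hG
        small := by
          intro α hα
          rcases hGv α with h | h | h | h | h
          · exact Or.inl h
          · exact Or.inr (Or.inl h)
          · exact Or.inr (Or.inr h)
          · exact absurd (hconst α 1 (by simp) (by rw [hG, h, hcard]; ring)) hα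
          · exact absurd (hconst α (-1) (by simp) (by rw [hG, h, hcard]; ring)) hα }
    rcases hspec.dichotomy hne hSu with hI | ⟨F, P, hF, h4, hP⟩
    · exact Or.inl (hspec.two_flats hn hI)
    · exact Or.inr (hspec.four_flats hn hF h4 hP)
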